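/- Let (λₖ) and (μₖ) be sequences of positive reals with λₖ → ∞ and μₖ/λₖ → ∞, and for each k let (uₖ, Nₖ) be a solution of the Maxwell–Chern–Simons vortex equations with parameters λₖ, μₖ. Then there exists a subsequence (k_j) such that one of the following two alternatives holds: (i) for every compact set K ⊂ ℝ² with K ∩ (Z + Λ) = ∅, sup_{x ∈ K} |u_{k_j}(x)| → 0 as j → ∞; or (ii) there exists a constant ν₀ > 0 such that sup_{x ∈ ℝ² ∖ (Z + Λ)} u_{k_j}(x) ≤ −ν₀ for every j. -/

import Mathlib

/-!
Write `w = e^u` and `T = N - λw`.  If `sup u_k` stays below some `-ν < 0` for infinitely many `k`,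
those indices give the second alternative.  Otherwise `sup u_k → 0`, and the whole sequence tends to
`0` away from the vortices.  No limit equation is needed: everything follows from maximum principles
at the length scale `1/λ` and one energy estimate.

* Maximum principles give `0 ≤ w ≤ 1`, `0 ≤ N ≤ λ` and `T ≥ 0` (`N_nonneg`,
  `expu_le_one_and_N_le`, `lam_expu_le_N`); in particular `-u` is subharmonic off the vortices.
  The mass `μ ∫ T` does not depend on the solution or the parameters (`mass_eq`).
* Since `Δw - μ⁻¹ΔN + 3μT ≥ w(|∇u|² + λ²(1 - w)²)`, integration and the inequality
  `2ab ≤ a² + b²` bound the total variation of `G = (1 - w)²` by a constant times `1/λ`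
  (`modica_mortola`, `energy_bound`).
* Hence among the coordinate lines of the lattice lying in a strip of width of order `1/λ` there is
  one along which `G` oscillates by at most a prescribed `σ` (`exists_good_line1`,
  `exists_good_line2`).  Good lines in the two directions cross, so `G` is almost constant on the
  union of all of them (`good_osc`), and every point lies in a box of size of order `1/λ` bounded
  by good lines (`exists_good_box`).
* The function `H = -u + (λ - N)/μ ≥ -u` satisfies `ΔH = λw(λ - N) ≤ λ²H`.  At a point where `u`
  is close to `0`, `H` is small because `λ/μ → 0`; comparison with the barrier `z`, `Δz = λ²z`,
  produces a point on a good line where `-u` is small (`exists_small_boundary`).  So `G`, and with it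
  `-u`, is small on all good lines.
* A point at distance much larger than `1/λ` from the vortices lies in a vortex-free box bounded by
  good lines, and the subharmonic function `-u` is small there as well (`neg_u_le_of_boundary`,
  `sol_close`).
-/

open MeasureTheory Real Filter Metric Set

noncomputable section

/-- The plane `ℝ²`. -/
abbrev R2 : Type := EuclideanSpace ℝ (Fin 2)

/-- The Laplacian `Δf = ∂²f/∂x₁² + ∂²f/∂x₂²`. -/
def lap (f : R2 → ℝ) (x : R2) : ℝ :=
  ∑ i : Fin 2,
    fderiv ℝ (fun y => fderiv ℝ f y (EuclideanSpace.single i 1)) x (EuclideanSpace.single i 1)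

/-- The lattice `Λ = ℤa₁ + ℤa₂`. -/
def lattice (a1 a2 : R2) : Set R2 := {x | ∃ k l : ℤ, x = (k : ℝ) • a1 + (l : ℝ) • a2}

/-- The fundamental cell `Ω = {t₁a₁ + t₂a₂ : 0 < t₁, t₂ < 1}`. -/
def cell (a1 a2 : R2) : Set R2 :=
  {x | ∃ t1 t2 : ℝ, t1 ∈ Set.Ioo (0:ℝ) 1 ∧ t2 ∈ Set.Ioo (0:ℝ) 1 ∧ x = t1 • a1 + t2 • a2}

/-- `Λ`-periodicity of a function on `ℝ²`. -/
def Periodic2 (a1 a2 : R2) (f : R2 → ℝ) : Prop :=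
  ∀ x : R2, ∀ w ∈ lattice a1 a2, f (x + w) = f x

/-- The torus and vortex data: a lattice with fundamental cell of area 1, and distinct
vortex points `p₁, …, pₙ ∈ Ω` with positive multiplicities `m₁, …, mₙ`. -/
structure VortexData where
  a1 : R2
  a2 : R2
  indep : LinearIndependent ℝ ![a1, a2]
  area_one : volume (cell a1 a2) = 1
  n : ℕ
  p : Fin n → R2
  m : Fin n → ℕ
  m_pos : ∀ i, 0 < m i
  p_mem : ∀ i, p i ∈ cell a1 a2
  p_inj : Function.Injective p

/-- The singular set `Z + Λ`. -/
def VortexData.sing (D : VortexData) : Set R2 :=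
  {x | ∃ i : Fin D.n, ∃ w ∈ lattice D.a1 D.a2, x = D.p i + w}

/-- The total vortex number `𝔐 = Σᵢ mᵢ`. -/
def VortexData.M (D : VortexData) : ℝ := ∑ i, (D.m i : ℝ)

open Classical in
/-- `e^u`, extended continuously by the value `0` on `Z + Λ`. -/
def VortexData.expu (D : VortexData) (u : R2 → ℝ) (x : R2) : ℝ :=
  if x ∈ D.sing then 0 else Real.exp (u x)

/-- `(u, N)` is a solution of the Maxwell–Chern–Simons vortex equations with
parameters `λ, μ`:  `u`, `N` are `Λ`-periodic, `u` is smooth away from `Z + Λ` with the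
prescribed logarithmic behaviour `u(x) = 2mᵢ ln|x − pᵢ| + smooth` near each vortex point,
`N` is smooth, and the equations `Δu = λμ eᵘ − μN` (away from `Z + Λ`) and
`ΔN = μ(μ + λeᵘ)N − λμ(μ + λ)eᵘ` (everywhere, with `eᵘ` extended by `0` on `Z + Λ`)
hold pointwise. -/
def IsMCSSolution (D : VortexData) (lam mu : ℝ) (u N : R2 → ℝ) : Prop :=
  Periodic2 D.a1 D.a2 u ∧ Periodic2 D.a1 D.a2 N ∧
  ContDiffOn ℝ (⊤ : ℕ∞) u D.singᶜ ∧ ContDiff ℝ (⊤ : ℕ∞) N ∧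
  (∀ i : Fin D.n, ∃ ε > (0:ℝ), ∃ v : R2 → ℝ, ContDiffOn ℝ (⊤ : ℕ∞) v (Metric.ball (D.p i) ε) ∧
    ∀ x ∈ Metric.ball (D.p i) ε, x ≠ D.p i →
      u x = v x + 2 * (D.m i : ℝ) * Real.log ‖x - D.p i‖) ∧
  (∀ x ∉ D.sing, lap u x = lam * mu * Real.exp (u x) - mu * N x) ∧
  (∀ x : R2, lap N x = mu * (mu + lam * D.expu u x) * N x - lam * mu * (mu + lam) * D.expu u x)

/-! ### The Laplacian -/

/-- The `i`-th coordinate vector of the plane. -/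
local notation "𝐞" => fun i : Fin 2 => (EuclideanSpace.single i (1 : ℝ) : R2)

lemma lap_congr {f g : R2 → ℝ} {x : R2} (h : f =ᶠ[nhds x] g) : lap f x = lap g x := by
  unfold lap
  refine Finset.sum_congr rfl fun i _ => ?_
  have h1 : (fun y => fderiv ℝ f y (𝐞 i)) =ᶠ[nhds x] fun y => fderiv ℝ g y (𝐞 i) :=
    (h.fderiv (𝕜 := ℝ)).mono fun y hy => by simp only [hy]
  exact congrArg (fun A : R2 →L[ℝ] ℝ => A (𝐞 i)) h1.fderiv_eq

lemma contDiffAt_dir {f : R2 → ℝ} {x : R2} (hf : ContDiffAt ℝ 2 f x) (e : R2) :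
    ContDiffAt ℝ 1 (fun y => fderiv ℝ f y e) x :=
  (hf.fderiv_right (m := 1) (by norm_num)).clm_apply contDiffAt_const

lemma eventually_differentiableAt {f : R2 → ℝ} {x : R2} (hf : ContDiffAt ℝ 2 f x) :
    ∀ᶠ y in nhds x, DifferentiableAt ℝ f y :=
  (hf.eventually (by norm_num)).mono fun _ hy => hy.differentiableAt (by norm_num)

lemma lap_add_mul {f g : R2 → ℝ} {x : R2} (c : ℝ) (hf : ContDiffAt ℝ 2 f x)
    (hg : ContDiffAt ℝ 2 g x) :
    lap (fun y => f y + c * g y) x = lap f x + c * lap g x := by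
  unfold lap
  rw [Finset.mul_sum, ← Finset.sum_add_distrib]
  refine Finset.sum_congr rfl fun i _ => ?_
  have h1 : (fun y => fderiv ℝ (fun y => f y + c * g y) y (𝐞 i)) =ᶠ[nhds x]
      fun y => fderiv ℝ f y (𝐞 i) + c * fderiv ℝ g y (𝐞 i) := by
    filter_upwards [eventually_differentiableAt hf, eventually_differentiableAt hg] with y h1 h2
    rw [fderiv_fun_add h1 (h2.const_mul c), fderiv_const_mul h2]
    simp
  have h2 := (contDiffAt_dir hf (𝐞 i)).differentiableAt (by norm_num)
  have h3 := (contDiffAt_dir hg (𝐞 i)).differentiableAt (by norm_num)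
  rw [h1.fderiv_eq, fderiv_fun_add h2 (h3.const_mul c), fderiv_const_mul h3]
  simp

lemma lap_exp {u : R2 → ℝ} {x : R2} (hu : ContDiffAt ℝ 2 u x) :
    lap (fun y => Real.exp (u y)) x
      = Real.exp (u x) * (lap u x + ∑ i : Fin 2, (fderiv ℝ u x (𝐞 i)) ^ 2) := by
  unfold lap
  rw [← Finset.sum_add_distrib, Finset.mul_sum]
  refine Finset.sum_congr rfl fun i _ => ?_
  have h1 : (fun y => fderiv ℝ (fun y => Real.exp (u y)) y (𝐞 i)) =ᶠ[nhds x]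
      fun y => Real.exp (u y) * fderiv ℝ u y (𝐞 i) := by
    filter_upwards [eventually_differentiableAt hu] with y h1
    rw [fderiv_exp h1]
    simp
  have h2 := (contDiffAt_dir hu (𝐞 i)).differentiableAt (by norm_num)
  have h3 : DifferentiableAt ℝ u x := hu.differentiableAt (by norm_num)
  rw [h1.fderiv_eq, fderiv_fun_mul h3.exp h2, fderiv_exp h3]
  simp
  ring

/-- The exponential barrier `exp (c y₁ + b)`, an eigenfunction of the Laplacian. -/
def barrier (c b : ℝ) (y : R2) : ℝ := Real.exp (c * y 0 + b)

lemma contDiff_barrier (c b : ℝ) : ContDiff ℝ 2 (barrier c b) := by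
  unfold barrier
  have : ContDiff ℝ 2 fun y : R2 => y 0 := (EuclideanSpace.proj (𝕜 := ℝ) (0 : Fin 2)).contDiff
  fun_prop

lemma lap_barrier (c b : ℝ) (x : R2) : lap (barrier c b) x = c ^ 2 * barrier c b x := by
  have hp : ContDiff ℝ 2 fun y : R2 => y 0 := (EuclideanSpace.proj (𝕜 := ℝ) (0 : Fin 2)).contDiff
  have hfd : ∀ y, fderiv ℝ (fun y : R2 => c * y 0 + b) y
      = c • (EuclideanSpace.proj (𝕜 := ℝ) (0 : Fin 2) : R2 →L[ℝ] ℝ) := fun y =>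
    (((EuclideanSpace.proj (𝕜 := ℝ) (0 : Fin 2) : R2 →L[ℝ] ℝ).hasFDerivAt (x := y)).const_mul
      c |>.add_const b).fderiv
  have h := lap_exp (u := fun y : R2 => c * y 0 + b) (x := x) (by fun_prop)
  have h0 : lap (fun y : R2 => c * y 0 + b) x = 0 := by
    unfold lap
    simp only [hfd]
    simp
  rw [h0] at h
  simp only [hfd] at h
  unfold barrier
  rw [h]
  simp
  ring

/-- At an interior maximum the Laplacian is nonpositive. -/
lemma lap_nonpos_of_isLocalMax {f : R2 → ℝ} {x : R2} (hf : ContDiffAt ℝ 2 f x)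
    (hm : IsLocalMax f x) : lap f x ≤ 0 := by
  refine Finset.sum_nonpos fun i _ => ?_
  set g : ℝ → ℝ := fun t => f (x + t • 𝐞 i) with hg
  have hline : ∀ t : ℝ, HasDerivAt (fun t : ℝ => x + t • 𝐞 i) (𝐞 i) t := fun t => by
    simpa using ((hasDerivAt_id t).smul_const (𝐞 i)).const_add x
  have hx0 : x + (0 : ℝ) • 𝐞 i = x := by simp
  have hcont : Filter.Tendsto (fun t : ℝ => x + t • 𝐞 i) (nhds 0) (nhds x) := by
    have := (hline 0).continuousAt.tendsto
    rwa [hx0] at this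
  have hd1 : deriv g =ᶠ[nhds 0] fun t => fderiv ℝ f (x + t • 𝐞 i) (𝐞 i) := by
    filter_upwards [hcont.eventually (eventually_differentiableAt hf)] with t ht
    exact (ht.hasFDerivAt.comp_hasDerivAt t (hline t)).deriv
  have hd2 : deriv (deriv g) 0 = fderiv ℝ (fun y => fderiv ℝ f y (𝐞 i)) x (𝐞 i) := by
    rw [hd1.deriv_eq]
    have h2 := (contDiffAt_dir hf (𝐞 i)).differentiableAt (by norm_num)
    have h3 : HasFDerivAt (fun y => fderiv ℝ f y (𝐞 i))
      (fderiv ℝ (fun y => fderiv ℝ f y (𝐞 i)) x) (x + (0 : ℝ) • 𝐞 i) := by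
      rw [hx0]; exact h2.hasFDerivAt
    exact (h3.comp_hasDerivAt 0 (hline 0)).deriv
  have hmax : IsLocalMax g 0 := by
    have : ∀ᶠ t in nhds (0 : ℝ), f (x + t • 𝐞 i) ≤ f x := hcont.eventually hm
    filter_upwards [this] with t ht
    simpa [hg] using ht
  by_contra hcon
  push Not at hcon
  have hmin : IsLocalMin g 0 := by
    refine isLocalMin_of_deriv_deriv_pos (by rw [hd2]; exact hcon) hmax.deriv_eq_zero ?_
    have h1 : ContinuousAt f (x + (0 : ℝ) • 𝐞 i) := by rw [hx0]; exact hf.continuousAt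
    exact ContinuousAt.comp (f := fun t : ℝ => x + t • 𝐞 i) h1 (hline 0).continuousAt
  -- a local maximum that is also a local minimum: `g` is locally constant
  have hconst : g =ᶠ[nhds 0] fun _ => g 0 := by
    filter_upwards [hmax, hmin] with t h1 h2 using le_antisymm h1 h2
  have : deriv (deriv g) 0 = 0 := by
    rw [hconst.deriv.deriv_eq]
    simp
  rw [hd2] at this
  linarith

/-! ### Lattice coordinates, periodic functions and the singular set -/

/-- The coordinate functionals dual to the lattice basis. -/
lemma exists_coords (D : VortexData) : ∃ c1 c2 : R2 →L[ℝ] ℝ,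
    (∀ x, x = c1 x • D.a1 + c2 x • D.a2) ∧ c1 D.a1 = 1 ∧ c1 D.a2 = 0 ∧ c2 D.a1 = 0 ∧
      c2 D.a2 = 1 := by
  let b := basisOfLinearIndependentOfCardEqFinrank D.indep (by simp)
  have hb : ∀ i, b i = ![D.a1, D.a2] i := fun i => by simp [b]
  have h0 : b 0 = D.a1 := hb 0
  have h1 : b 1 = D.a2 := hb 1
  refine ⟨LinearMap.toContinuousLinearMap (b.coord 0), LinearMap.toContinuousLinearMap (b.coord 1),
    fun x => ?_, ?_, ?_, ?_, ?_⟩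
  · have := b.sum_repr x
    rw [Fin.sum_univ_two, h0, h1] at this
    simpa using this.symm
  · rw [← h0]; simp
  · rw [← h1]; simp
  · rw [← h0]; simp
  · rw [← h1]; simp

/-- First lattice coordinate. -/
def VortexData.c1 (D : VortexData) : R2 →L[ℝ] ℝ := (exists_coords D).choose

/-- Second lattice coordinate. -/
def VortexData.c2 (D : VortexData) : R2 →L[ℝ] ℝ := (exists_coords D).choose_spec.choose

/-- The point with lattice coordinates `s, t`. -/
def VortexData.pt (D : VortexData) (s t : ℝ) : R2 := s • D.a1 + t • D.a2

section coords
variable (D : VortexData)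

lemma coords_spec : (∀ x, x = D.c1 x • D.a1 + D.c2 x • D.a2) ∧ D.c1 D.a1 = 1 ∧ D.c1 D.a2 = 0 ∧
    D.c2 D.a1 = 0 ∧ D.c2 D.a2 = 1 := (exists_coords D).choose_spec.choose_spec

lemma pt_coords (x : R2) : D.pt (D.c1 x) (D.c2 x) = x := ((coords_spec D).1 x).symm

@[simp] lemma c1_pt (s t : ℝ) : D.c1 (D.pt s t) = s := by
  obtain ⟨-, h1, h2, h3, h4⟩ := coords_spec D
  simp [VortexData.pt, h1, h2]

@[simp] lemma c2_pt (s t : ℝ) : D.c2 (D.pt s t) = t := by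
  obtain ⟨-, h1, h2, h3, h4⟩ := coords_spec D
  simp [VortexData.pt, h3, h4]

lemma pt_add (s t s' t' : ℝ) : D.pt (s + s') (t + t') = D.pt s t + D.pt s' t' := by
  simp only [VortexData.pt]; module

lemma continuous_pt : Continuous fun z : ℝ × ℝ => D.pt z.1 z.2 := by
  unfold VortexData.pt; fun_prop

lemma pt_int_mem (k l : ℤ) : D.pt k l ∈ lattice D.a1 D.a2 := ⟨k, l, rfl⟩

lemma periodic_pt {f : R2 → ℝ} (hf : Periodic2 D.a1 D.a2 f) (s t : ℝ) (k l : ℤ) :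
    f (D.pt (s + k) (t + l)) = f (D.pt s t) := by
  rw [pt_add]; exact hf _ _ (pt_int_mem D k l)

/-- The closed coordinate parallelogram `[s₁, s₂] × [t₁, t₂]`. -/
def VortexData.box (s1 s2 t1 t2 : ℝ) : Set R2 :=
  {x | D.c1 x ∈ Icc s1 s2 ∧ D.c2 x ∈ Icc t1 t2}

lemma isCompact_box (s1 s2 t1 t2 : ℝ) : IsCompact (D.box s1 s2 t1 t2) := by
  have h : D.box s1 s2 t1 t2 = (fun z : ℝ × ℝ => D.pt z.1 z.2) '' (Icc s1 s2 ×ˢ Icc t1 t2) := by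
    ext x
    constructor
    · rintro ⟨h1, h2⟩
      exact ⟨(D.c1 x, D.c2 x), ⟨h1, h2⟩, pt_coords D x⟩
    · rintro ⟨z, ⟨h1, h2⟩, rfl⟩
      exact ⟨by simpa using h1, by simpa using h2⟩
  rw [h]
  exact (isCompact_Icc.prod isCompact_Icc).image (continuous_pt D)

lemma box_mem_nhds {s1 s2 t1 t2 : ℝ} {x : R2} (h1 : D.c1 x ∈ Ioo s1 s2)
    (h2 : D.c2 x ∈ Ioo t1 t2) : D.box s1 s2 t1 t2 ∈ nhds x := by
  have h3 := D.c1.continuous.continuousAt.eventually (isOpen_Ioo.mem_nhds h1)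
  have h4 := D.c2.continuous.continuousAt.eventually (isOpen_Ioo.mem_nhds h2)
  filter_upwards [h3, h4] with y hy1 hy2
  exact ⟨Ioo_subset_Icc_self hy1, Ioo_subset_Icc_self hy2⟩

lemma norm_pt_le (s t : ℝ) : ‖D.pt s t‖ ≤ |s| * ‖D.a1‖ + |t| * ‖D.a2‖ := by
  unfold VortexData.pt
  refine (norm_add_le _ _).trans ?_
  rw [norm_smul, norm_smul, Real.norm_eq_abs, Real.norm_eq_abs]

lemma norm_sub_le_coords (x y : R2) :
    ‖x - y‖ ≤ |D.c1 x - D.c1 y| * ‖D.a1‖ + |D.c2 x - D.c2 y| * ‖D.a2‖ := by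
  have h := norm_pt_le D (D.c1 (x - y)) (D.c2 (x - y))
  rwa [pt_coords, map_sub, map_sub] at h

lemma exists_max_periodic {f : R2 → ℝ} (hf : Periodic2 D.a1 D.a2 f) (hc : Continuous f) :
    ∃ y, ∀ x, f x ≤ f y := by
  obtain ⟨y, -, hy⟩ := (isCompact_box D 0 1 0 1).exists_isMaxOn
    ⟨0, by simp [VortexData.box]⟩ hc.continuousOn
  refine ⟨y, fun x => ?_⟩
  have h := periodic_pt D hf (Int.fract (D.c1 x)) (Int.fract (D.c2 x)) ⌊D.c1 x⌋ ⌊D.c2 x⌋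
  rw [Int.fract_add_floor, Int.fract_add_floor, pt_coords] at h
  rw [h]
  refine hy ⟨?_, ?_⟩
  · simp only [c1_pt]; exact ⟨Int.fract_nonneg _, (Int.fract_lt_one _).le⟩
  · simp only [c2_pt]; exact ⟨Int.fract_nonneg _, (Int.fract_lt_one _).le⟩

lemma lattice_add {v w : R2} (hv : v ∈ lattice D.a1 D.a2) (hw : w ∈ lattice D.a1 D.a2) :
    v + w ∈ lattice D.a1 D.a2 := by
  obtain ⟨k, l, rfl⟩ := hv
  obtain ⟨k', l', rfl⟩ := hw
  exact ⟨k + k', l + l', by push_cast; module⟩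

lemma lattice_neg {v : R2} (hv : v ∈ lattice D.a1 D.a2) : -v ∈ lattice D.a1 D.a2 := by
  obtain ⟨k, l, rfl⟩ := hv
  exact ⟨-k, -l, by push_cast; module⟩

lemma sing_add_iff {x w : R2} (hw : w ∈ lattice D.a1 D.a2) : x + w ∈ D.sing ↔ x ∈ D.sing := by
  constructor
  · rintro ⟨i, v, hv, h⟩
    exact ⟨i, v + -w, lattice_add D hv (lattice_neg D hw), by rw [← add_assoc, ← h]; module⟩
  · rintro ⟨i, v, hv, rfl⟩
    exact ⟨i, v + w, lattice_add D hv hw, by module⟩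

lemma p_mem_sing (i : Fin D.n) : D.p i ∈ D.sing := ⟨i, 0, ⟨0, 0, by simp⟩, by simp⟩

lemma mem_cell_iff (x : R2) :
    x ∈ cell D.a1 D.a2 ↔ D.c1 x ∈ Ioo (0 : ℝ) 1 ∧ D.c2 x ∈ Ioo (0 : ℝ) 1 := by
  constructor
  · rintro ⟨s, t, hs, ht, rfl⟩
    change D.c1 (D.pt s t) ∈ _ ∧ D.c2 (D.pt s t) ∈ _
    simpa using And.intro hs ht
  · rintro ⟨h1, h2⟩
    exact ⟨_, _, h1, h2, (coords_spec D).1 x⟩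

lemma isOpen_cell : IsOpen (cell D.a1 D.a2) := by
  have : cell D.a1 D.a2 = D.c1 ⁻¹' Ioo 0 1 ∩ D.c2 ⁻¹' Ioo 0 1 := by
    ext x; exact mem_cell_iff D x
  rw [this]
  exact (isOpen_Ioo.preimage D.c1.continuous).inter (isOpen_Ioo.preimage D.c2.continuous)

/-- The fundamental cell meets `Z + Λ` only in the vortex points themselves. -/
lemma sing_inter_cell {x : R2} (hx : x ∈ cell D.a1 D.a2) (hs : x ∈ D.sing) :
    x ∈ range D.p := by
  obtain ⟨i, w, ⟨k, l, rfl⟩, rfl⟩ := hs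
  have h1 := (mem_cell_iff D _).1 hx
  have h2 := (mem_cell_iff D _).1 (D.p_mem i)
  have hw : (k : ℝ) • D.a1 + (l : ℝ) • D.a2 = D.pt k l := rfl
  rw [hw, map_add, map_add, c1_pt, c2_pt] at h1
  obtain ⟨⟨a1, a2⟩, a3, a4⟩ := h1
  obtain ⟨⟨b1, b2⟩, b3, b4⟩ := h2
  have hk : k = 0 := by
    have e1 : (k : ℝ) < 1 := by linarith
    have e2 : (-1 : ℝ) < k := by linarith
    have e1' : k < 1 := by exact_mod_cast e1
    have e2' : -1 < k := by exact_mod_cast e2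
    omega
  have hl : l = 0 := by
    have e1 : (l : ℝ) < 1 := by linarith
    have e2 : (-1 : ℝ) < l := by linarith
    have e1' : l < 1 := by exact_mod_cast e1
    have e2' : -1 < l := by exact_mod_cast e2
    omega
  exact ⟨i, by simp [hk, hl]⟩

/-- Each vortex point is an isolated point of `Z + Λ`. -/
lemma sing_isolated (i : Fin D.n) : ∀ᶠ x in nhds (D.p i), x ∈ D.sing → x = D.p i := by
  have h1 : cell D.a1 D.a2 ∈ nhds (D.p i) := (isOpen_cell D).mem_nhds (D.p_mem i)
  have h2 : (range D.p \ {D.p i})ᶜ ∈ nhds (D.p i) :=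
    (((finite_range D.p).subset sdiff_subset).isClosed.isOpen_compl).mem_nhds (by simp)
  filter_upwards [h1, h2] with x hx1 hx2 hs
  by_contra hne
  exact hx2 ⟨sing_inter_cell D hx1 hs, hne⟩

lemma isClosed_sing : IsClosed D.sing := by
  have h : D.sing = ⋃ i : Fin D.n, ((fun x => D.c1 (x - D.p i)) ⁻¹' range ((↑) : ℤ → ℝ) ∩
      (fun x => D.c2 (x - D.p i)) ⁻¹' range ((↑) : ℤ → ℝ)) := by
    ext x
    simp only [mem_iUnion]
    constructor
    · rintro ⟨i, w, ⟨k, l, rfl⟩, rfl⟩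
      refine ⟨i, ⟨k, ?_⟩, ⟨l, ?_⟩⟩
      · beta_reduce; rw [add_sub_cancel_left]; exact (c1_pt D k l).symm
      · beta_reduce; rw [add_sub_cancel_left]; exact (c2_pt D k l).symm
    · rintro ⟨i, ⟨k, hk⟩, ⟨l, hl⟩⟩
      refine ⟨i, x - D.p i, ⟨k, l, ?_⟩, by module⟩
      rw [hk, hl]
      exact (coords_spec D).1 _
  rw [h]
  refine isClosed_iUnion_of_finite fun i => ?_
  have hc : IsClosed (range ((↑) : ℤ → ℝ)) := Int.isClosedEmbedding_coe_real.isClosed_range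
  exact (hc.preimage (by fun_prop)).inter (hc.preimage (by fun_prop))

lemma dense_sing_compl : Dense D.singᶜ := by
  refine Set.Countable.dense_compl ℝ ?_
  have : D.sing ⊆ range fun z : Fin D.n × ℤ × ℤ => D.p z.1 + D.pt z.2.1 z.2.2 := by
    rintro x ⟨i, w, ⟨k, l, rfl⟩, rfl⟩
    exact ⟨(i, k, l), rfl⟩
  exact (countable_range _).mono this

lemma compl_sing_mem_nhds {x : R2} (hx : x ∉ D.sing) : D.singᶜ ∈ nhds x :=
  (isClosed_sing D).isOpen_compl.mem_nhds hx

end coords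

/-! ### Integration over the fundamental cell -/

/-- The integral over the fundamental cell, as an iterated integral in lattice coordinates without
Jacobian factor. -/
def VortexData.I (D : VortexData) (F : R2 → ℝ) : ℝ :=
  ∫ t in (0 : ℝ)..1, ∫ s in (0 : ℝ)..1, F (D.pt s t)

section integral
variable (D : VortexData)

lemma continuous_cell_inner {F : R2 → ℝ} (hF : Continuous F) :
    Continuous fun t => ∫ s in (0 : ℝ)..1, F (D.pt s t) := by
  refine intervalIntegral.continuous_parametric_intervalIntegral_of_continuous'
    (f := fun t s => F (D.pt s t)) ?_ 0 1
  exact hF.comp ((continuous_pt D).comp continuous_swap)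

lemma continuous_line {F : R2 → ℝ} (hF : Continuous F) (t : ℝ) :
    Continuous fun s => F (D.pt s t) :=
  hF.comp ((continuous_pt D).comp (by fun_prop : Continuous fun s : ℝ => (s, t)))

lemma I_add_mul {F G : R2 → ℝ} (hF : Continuous F) (hG : Continuous G) (c : ℝ) :
    D.I (fun x => F x + c * G x) = D.I F + c * D.I G := by
  unfold VortexData.I
  have h : ∀ t, ∫ s in (0 : ℝ)..1, (F (D.pt s t) + c * G (D.pt s t))
      = (∫ s in (0 : ℝ)..1, F (D.pt s t)) + c * ∫ s in (0 : ℝ)..1, G (D.pt s t) := fun t => by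
    rw [intervalIntegral.integral_add ((continuous_line D hF t).intervalIntegrable _ _)
      (((continuous_line D hG t).intervalIntegrable _ _).const_mul c),
      intervalIntegral.integral_const_mul]
  simp only [h]
  rw [intervalIntegral.integral_add ((continuous_cell_inner D hF).intervalIntegrable _ _)
      (((continuous_cell_inner D hG).intervalIntegrable _ _).const_mul c),
      intervalIntegral.integral_const_mul]

lemma I_const_mul {G : R2 → ℝ} (hG : Continuous G) (c : ℝ) :
    D.I (fun x => c * G x) = c * D.I G := by
  have h := I_add_mul D (F := fun _ => 0) continuous_const hG c
  simpa only [zero_add, VortexData.I, intervalIntegral.integral_zero] using h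

lemma I_mono {F G : R2 → ℝ} (hF : Continuous F) (hG : Continuous G) (h : ∀ x, F x ≤ G x) :
    D.I F ≤ D.I G := by
  unfold VortexData.I
  refine intervalIntegral.integral_mono_on zero_le_one
    ((continuous_cell_inner D hF).intervalIntegrable _ _)
    ((continuous_cell_inner D hG).intervalIntegrable _ _) fun t _ => ?_
  exact intervalIntegral.integral_mono_on zero_le_one
    ((continuous_line D hF t).intervalIntegrable _ _)
    ((continuous_line D hG t).intervalIntegrable _ _) fun s _ => h _

lemma I_nonneg {F : R2 → ℝ} (h : ∀ x, 0 ≤ F x) : 0 ≤ D.I F :=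
  intervalIntegral.integral_nonneg zero_le_one fun _ _ =>
    intervalIntegral.integral_nonneg zero_le_one fun _ _ => h _

lemma I_swap {F : R2 → ℝ} (hF : Continuous F) :
    D.I F = ∫ s in (0 : ℝ)..1, ∫ t in (0 : ℝ)..1, F (D.pt s t) := by
  refine intervalIntegral_intervalIntegral_swap (F := fun t s => F (D.pt s t)) ?_
  have h : Continuous (Function.uncurry fun t s => F (D.pt s t)) :=
    hF.comp ((continuous_pt D).comp continuous_swap)
  exact (h.continuousOn.integrableOn_compact (isCompact_uIcc.prod isCompact_uIcc)).mono_set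
    (prod_mono uIoc_subset_uIcc uIoc_subset_uIcc)

lemma hasDerivAt_pt1 {f : R2 → ℝ} (hf : ContDiff ℝ 1 f) (s t : ℝ) :
    HasDerivAt (fun s => f (D.pt s t)) (fderiv ℝ f (D.pt s t) D.a1) s := by
  have h : HasDerivAt (fun s => D.pt s t) D.a1 s := by
    simpa [VortexData.pt] using ((hasDerivAt_id s).smul_const D.a1).add_const (t • D.a2)
  exact ((hf.differentiable (by norm_num)) _).hasFDerivAt.comp_hasDerivAt s h

lemma hasDerivAt_pt2 {f : R2 → ℝ} (hf : ContDiff ℝ 1 f) (s t : ℝ) :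
    HasDerivAt (fun t => f (D.pt s t)) (fderiv ℝ f (D.pt s t) D.a2) t := by
  have h : HasDerivAt (fun t => D.pt s t) D.a2 t := by
    simpa [VortexData.pt] using ((hasDerivAt_id t).smul_const D.a2).const_add (s • D.a1)
  exact ((hf.differentiable (by norm_num)) _).hasFDerivAt.comp_hasDerivAt t h

lemma continuous_dir {f : R2 → ℝ} (hf : ContDiff ℝ 1 f) (e : R2) :
    Continuous fun x => fderiv ℝ f x e :=
  (hf.continuous_fderiv (by norm_num)).clm_apply continuous_const

lemma continuous_line2 {F : R2 → ℝ} (hF : Continuous F) (s : ℝ) :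
    Continuous fun t => F (D.pt s t) :=
  hF.comp ((continuous_pt D).comp (by fun_prop : Continuous fun t : ℝ => (s, t)))

/-- The integral of a directional derivative of a periodic function vanishes. -/
lemma I_dir {f : R2 → ℝ} (hf : ContDiff ℝ 1 f) (hp : Periodic2 D.a1 D.a2 f) (e : R2) :
    D.I (fun x => fderiv ℝ f x e) = 0 := by
  have h1 : D.I (fun x => fderiv ℝ f x D.a1) = 0 := by
    have : ∀ t, ∫ s in (0 : ℝ)..1, fderiv ℝ f (D.pt s t) D.a1 = 0 := fun t => by
      rw [intervalIntegral.integral_eq_sub_of_hasDerivAt (f := fun s => f (D.pt s t))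
        (fun s _ => hasDerivAt_pt1 D hf s t)
        ((continuous_line D (continuous_dir hf D.a1) t).intervalIntegrable _ _)]
      have := periodic_pt D hp 0 t 1 0
      simp only [zero_add, Int.cast_one, Int.cast_zero, add_zero] at this
      rw [this, sub_self]
    unfold VortexData.I
    simp [this]
  have h2 : D.I (fun x => fderiv ℝ f x D.a2) = 0 := by
    have : ∀ s, ∫ t in (0 : ℝ)..1, fderiv ℝ f (D.pt s t) D.a2 = 0 := fun s => by
      rw [intervalIntegral.integral_eq_sub_of_hasDerivAt (f := fun t => f (D.pt s t))
        (fun t _ => hasDerivAt_pt2 D hf s t)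
        ((continuous_line2 D (continuous_dir hf D.a2) s).intervalIntegrable _ _)]
      have := periodic_pt D hp s 0 0 1
      simp only [zero_add, Int.cast_one, Int.cast_zero, add_zero] at this
      rw [this, sub_self]
    rw [I_swap D (continuous_dir hf D.a2)]
    simp [this]
  have h3 : ∀ x, fderiv ℝ f x e = D.c1 e * fderiv ℝ f x D.a1 + D.c2 e * fderiv ℝ f x D.a2 :=
    fun x => by
      conv_lhs => rw [(coords_spec D).1 e]
      simp
  simp only [h3]
  rw [I_add_mul D (F := fun x => D.c1 e * fderiv ℝ f x D.a1)
      (continuous_const.mul (continuous_dir hf D.a1)) (continuous_dir hf D.a2),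
    I_const_mul D (continuous_dir hf D.a1), h1, h2]
  simp

lemma periodic_dir {f : R2 → ℝ} (hp : Periodic2 D.a1 D.a2 f) (e : R2) :
    Periodic2 D.a1 D.a2 fun x => fderiv ℝ f x e := fun x w hw => by
  have h : (fun y => f (y + w)) = f := funext fun y => hp y w hw
  have h2 : fderiv ℝ (fun y => f (y + w)) x = fderiv ℝ f (x + w) := fderiv_comp_add_right w
  rw [h] at h2
  beta_reduce
  rw [h2]

lemma continuous_lap {f : R2 → ℝ} (hf : ContDiff ℝ 2 f) : Continuous (lap f) := by
  unfold lap
  refine continuous_finsetSum _ fun i _ => ?_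
  refine continuous_dir (contDiff_iff_contDiffAt.2 fun x => ?_) _
  exact contDiffAt_dir hf.contDiffAt _

/-- The integral of the Laplacian of a periodic function vanishes. -/
lemma I_lap {f : R2 → ℝ} (hf : ContDiff ℝ 2 f) (hp : Periodic2 D.a1 D.a2 f) :
    D.I (lap f) = 0 := by
  have hd : ∀ i, ContDiff ℝ 1 fun y => fderiv ℝ f y (𝐞 i) := fun i =>
    contDiff_iff_contDiffAt.2 fun x => contDiffAt_dir hf.contDiffAt _
  have h : lap f = fun x => fderiv ℝ (fun y => fderiv ℝ f y (𝐞 0)) x (𝐞 0)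
      + 1 * fderiv ℝ (fun y => fderiv ℝ f y (𝐞 1)) x (𝐞 1) := by
    funext x; unfold lap; rw [Fin.sum_univ_two, one_mul]
  rw [h, I_add_mul D (continuous_dir (hd 0) _) (continuous_dir (hd 1) _),
    I_dir D (hd 0) (periodic_dir D hp _), I_dir D (hd 1) (periodic_dir D hp _)]
  simp

/-! ### Lines of small oscillation -/

/-- If the `L¹` norm of the derivative of the periodic function `g t`, averaged over `t`, is below
`σℓ`, then every interval of length `ℓ` contains a parameter `t` for which `g t` oscillates by at
most `σ`. -/
lemma exists_good_param {g g' : ℝ → ℝ → ℝ} {E σ ℓ : ℝ}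
    (hder : ∀ t s, HasDerivAt (g t) (g' t s) s) (hcont : Continuous (Function.uncurry g'))
    (hper : ∀ t s (k : ℤ), g t (s + k) = g t s) (hper' : ∀ t s, g' (t + 1) s = g' t s)
    (hE : ∫ t in (0 : ℝ)..1, ∫ s in (0 : ℝ)..1, |g' t s| ≤ E)
    (hl0 : 0 ≤ ℓ) (hl1 : ℓ ≤ 1) (hlt : E < σ * ℓ) (α : ℝ) :
    ∃ t ∈ Icc α (α + ℓ), ∀ s s', |g t s - g t s'| ≤ σ := by
  set A : ℝ → ℝ := fun t => ∫ s in (0 : ℝ)..1, |g' t s| with hA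
  have hAc : Continuous A :=
    intervalIntegral.continuous_parametric_intervalIntegral_of_continuous'
      (f := fun t s => |g' t s|) hcont.abs 0 1
  have hAper : Function.Periodic A 1 := fun t => by simp_rw [hA, hper']
  have hA0 : ∀ t, 0 ≤ A t := fun t =>
    intervalIntegral.integral_nonneg zero_le_one fun _ _ => abs_nonneg _
  have hgood : ∃ t ∈ Icc α (α + ℓ), A t ≤ σ := by
    by_contra hcon
    push Not at hcon
    have h1 : σ * ℓ ≤ ∫ t in α..(α + ℓ), A t := by
      have := intervalIntegral.integral_mono_on (μ := volume) (f := fun _ => σ) (g := A) (a := α)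
        (b := α + ℓ) (by linarith) (continuous_const.intervalIntegrable _ _)
        (hAc.intervalIntegrable _ _) fun t ht => (hcon t ht).le
      simp only [intervalIntegral.integral_const, smul_eq_mul] at this
      linarith
    have h2 : ∫ t in α..(α + ℓ), A t ≤ ∫ t in α..(α + 1), A t :=
      intervalIntegral.integral_mono_interval le_rfl (by linarith) (by linarith)
        (Filter.Eventually.of_forall hA0) (hAc.intervalIntegrable _ _)
    have h3 := hAper.intervalIntegral_add_eq α 0
    rw [zero_add] at h3
    linarith
  obtain ⟨t, ht, hts⟩ := hgood
  refine ⟨t, ht, ?_⟩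
  have hline : Continuous fun s => g' t s := hcont.comp (by fun_prop : Continuous fun s => (t, s))
  have key : ∀ s s' : ℝ, 0 ≤ s' → s' ≤ s → s ≤ 1 → |g t s - g t s'| ≤ σ := by
    intro s s' h0 h1 h2
    rw [← intervalIntegral.integral_eq_sub_of_hasDerivAt (fun x _ => hder t x)
      (hline.intervalIntegrable _ _)]
    refine (intervalIntegral.abs_integral_le_integral_abs h1).trans (le_trans ?_ hts)
    exact intervalIntegral.integral_mono_interval h0 h1 h2
      (Filter.Eventually.of_forall fun _ => abs_nonneg _) (hline.abs.intervalIntegrable _ _)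
  intro s s'
  have hfr : ∀ s, g t s = g t (Int.fract s) := fun s => by
    have := hper t (Int.fract s) ⌊s⌋
    rwa [Int.fract_add_floor] at this
  rw [hfr s, hfr s']
  rcases le_total (Int.fract s') (Int.fract s) with h | h
  · exact key _ _ (Int.fract_nonneg _) h (Int.fract_lt_one _).le
  · rw [abs_sub_comm]
    exact key _ _ (Int.fract_nonneg _) h (Int.fract_lt_one _).le

lemma exists_good_line1 {f : R2 → ℝ} (hf : ContDiff ℝ 1 f) (hp : Periodic2 D.a1 D.a2 f)
    {E σ ℓ : ℝ} (hE : D.I (fun x => |fderiv ℝ f x D.a1|) ≤ E)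
    (hl0 : 0 ≤ ℓ) (hl1 : ℓ ≤ 1) (hlt : E < σ * ℓ) (α : ℝ) :
    ∃ t ∈ Icc α (α + ℓ), ∀ s s', |f (D.pt s t) - f (D.pt s' t)| ≤ σ := by
  refine exists_good_param (g := fun t s => f (D.pt s t))
    (g' := fun t s => fderiv ℝ f (D.pt s t) D.a1) (fun t s => hasDerivAt_pt1 D hf s t)
    ((continuous_dir hf _).comp ((continuous_pt D).comp continuous_swap))
    (fun t s k => ?_) (fun t s => ?_) hE hl0 hl1 hlt α
  · simpa using periodic_pt D hp s t k 0
  · simpa using periodic_pt D (periodic_dir D hp D.a1) s t 0 1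

lemma exists_good_line2 {f : R2 → ℝ} (hf : ContDiff ℝ 1 f) (hp : Periodic2 D.a1 D.a2 f)
    {E σ ℓ : ℝ} (hE : D.I (fun x => |fderiv ℝ f x D.a2|) ≤ E)
    (hl0 : 0 ≤ ℓ) (hl1 : ℓ ≤ 1) (hlt : E < σ * ℓ) (α : ℝ) :
    ∃ s ∈ Icc α (α + ℓ), ∀ t t', |f (D.pt s t) - f (D.pt s t')| ≤ σ := by
  rw [I_swap D (continuous_dir hf _).abs] at hE
  refine exists_good_param (g := fun s t => f (D.pt s t))
    (g' := fun s t => fderiv ℝ f (D.pt s t) D.a2) (fun s t => hasDerivAt_pt2 D hf s t)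
    ((continuous_dir hf _).comp (continuous_pt D))
    (fun s t k => ?_) (fun s t => ?_) hE hl0 hl1 hlt α
  · simpa using periodic_pt D hp s t 0 k
  · simpa using periodic_pt D (periodic_dir D hp D.a2) s t 1 0

end integral

/-! ### Smoothness across the vortex points -/

section smooth
variable {D : VortexData}

lemma contDiff_of_periodic {f : R2 → ℝ} (hp : Periodic2 D.a1 D.a2 f)
    (h1 : ∀ x ∉ D.sing, ContDiffAt ℝ 2 f x) (h2 : ∀ i, ContDiffAt ℝ 2 f (D.p i)) :
    ContDiff ℝ 2 f := by
  refine contDiff_iff_contDiffAt.2 fun x => ?_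
  by_cases hx : x ∈ D.sing
  · obtain ⟨i, w, hw, rfl⟩ := hx
    have h3 : f = fun y => f (y - w) := funext fun y => by
      rw [sub_eq_add_neg]; exact (hp y (-w) (lattice_neg D hw)).symm
    rw [h3]
    have h4 : ContDiffAt ℝ 2 f (D.p i + w - w) := by rw [add_sub_cancel_right]; exact h2 i
    exact ContDiffAt.comp (f := fun y : R2 => y - w) _ h4 (by fun_prop)
  · exact h1 x hx

lemma expu_of_notMem {x : R2} (hx : x ∉ D.sing) (u : R2 → ℝ) :
    D.expu u x = Real.exp (u x) := by
  unfold VortexData.expu; rw [if_neg hx]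

lemma expu_of_mem {x : R2} (hx : x ∈ D.sing) (u : R2 → ℝ) : D.expu u x = 0 := by
  unfold VortexData.expu; rw [if_pos hx]

lemma expu_nonneg (u : R2 → ℝ) (x : R2) : 0 ≤ D.expu u x := by
  unfold VortexData.expu; split_ifs
  · exact le_rfl
  · exact (Real.exp_pos _).le

lemma expu_eventuallyEq {x : R2} (hx : x ∉ D.sing) (u : R2 → ℝ) :
    D.expu u =ᶠ[nhds x] fun y => Real.exp (u y) := by
  filter_upwards [compl_sing_mem_nhds D hx] with y hy using expu_of_notMem hy u

variable {lam mu : ℝ} {u N : R2 → ℝ}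

lemma contDiffAt_u (h : IsMCSSolution D lam mu u N) {x : R2} (hx : x ∉ D.sing) :
    ContDiffAt ℝ 2 u x :=
  (h.2.2.1.contDiffAt (compl_sing_mem_nhds D hx)).of_le (WithTop.coe_le_coe.2 le_top)

lemma contDiff_N (h : IsMCSSolution D lam mu u N) : ContDiff ℝ 2 N :=
  h.2.2.2.1.of_le (WithTop.coe_le_coe.2 le_top)

/-- The logarithmic singularity at a vortex point, on a neighbourhood free of other vortices. -/
lemma local_form (h : IsMCSSolution D lam mu u N) (i : Fin D.n) :
    ∃ v : R2 → ℝ, ContDiffAt ℝ 2 v (D.p i) ∧ ∀ᶠ x in nhds (D.p i), ContinuousAt v x ∧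
      (x ≠ D.p i → x ∉ D.sing ∧ u x = v x + 2 * (D.m i : ℝ) * Real.log ‖x - D.p i‖) := by
  obtain ⟨ε, hε, v, hv, huv⟩ := h.2.2.2.2.1 i
  have hb := Metric.ball_mem_nhds (D.p i) hε
  refine ⟨v, (hv.contDiffAt hb).of_le (WithTop.coe_le_coe.2 le_top), ?_⟩
  filter_upwards [hb, sing_isolated D i] with x hx hs
  exact ⟨(hv.contDiffAt (Metric.isOpen_ball.mem_nhds hx)).continuousAt,
    fun hne => ⟨fun hm => hne (hs hm), huv x hx hne⟩⟩

lemma periodic_expu (h : IsMCSSolution D lam mu u N) : Periodic2 D.a1 D.a2 (D.expu u) := by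
  intro x w hw
  by_cases hx : x ∈ D.sing
  · rw [expu_of_mem hx, expu_of_mem ((sing_add_iff D hw).2 hx)]
  · rw [expu_of_notMem hx, expu_of_notMem (fun hc => hx ((sing_add_iff D hw).1 hc)), h.1 x w hw]

/-- `e^u` is `C²` across the vortices, where it equals `e^v |x - pᵢ|^(2mᵢ)`. -/
lemma contDiff_expu (h : IsMCSSolution D lam mu u N) : ContDiff ℝ 2 (D.expu u) := by
  refine contDiff_of_periodic (periodic_expu h) (fun x hx => ?_) fun i => ?_
  · exact (contDiffAt_u h hx).exp.congr_of_eventuallyEq (expu_eventuallyEq hx u)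
  · obtain ⟨v, hv, hloc⟩ := local_form h i
    have hsm : ContDiffAt ℝ 2 (fun x => Real.exp (v x) * (‖x - D.p i‖ ^ 2) ^ (D.m i)) (D.p i) := by
      have h1 : ContDiff ℝ 2 fun x : R2 => ‖x - D.p i‖ ^ 2 :=
        (contDiff_norm_sq ℝ).comp (contDiff_id.sub contDiff_const)
      exact hv.exp.mul (h1.pow _).contDiffAt
    refine hsm.congr_of_eventuallyEq ?_
    filter_upwards [hloc] with x hx
    by_cases hne : x = D.p i
    · rw [hne, expu_of_mem (p_mem_sing D i)]
      simp [(D.m_pos i).ne']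
    · obtain ⟨h1, h2⟩ := hx.2 hne
      have hpos : 0 < ‖x - D.p i‖ := norm_pos_iff.2 (sub_ne_zero.2 hne)
      rw [expu_of_notMem h1, h2, Real.exp_add]
      congr 1
      have : 2 * (D.m i : ℝ) * Real.log ‖x - D.p i‖
          = Real.log ‖x - D.p i‖ * ((2 * D.m i : ℕ) : ℝ) := by push_cast; ring
      rw [this, Real.exp_mul, Real.exp_log hpos, Real.rpow_natCast, pow_mul]

/-- The difference of two solutions (for any parameters) extends as a `C²` function across the
vortices,
since the logarithmic singularities cancel.  The extension is the limit over punctured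
neighbourhoods. -/
lemma exists_smooth_diff {lam' mu' : ℝ} {u' N' : R2 → ℝ} (h : IsMCSSolution D lam mu u N)
    (h' : IsMCSSolution D lam' mu' u' N') :
    ∃ d : R2 → ℝ, ContDiff ℝ 2 d ∧ Periodic2 D.a1 D.a2 d ∧ ∀ x ∉ D.sing, d x = u x - u' x := by
  set f : R2 → ℝ := fun x => u x - u' x with hf
  set d : R2 → ℝ := fun x => limUnder (nhdsWithin x {x}ᶜ) f with hd
  have hlim : ∀ (x : R2) (g : R2 → ℝ), ContinuousAt g x → f =ᶠ[nhdsWithin x {x}ᶜ] g →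
      d x = g x := fun x g hg hfg =>
    ((hg.tendsto.mono_left nhdsWithin_le_nhds).congr' hfg.symm).limUnder_eq
  have hcd : ∀ x ∉ D.sing, ContDiffAt ℝ 2 f x := fun x hx =>
    (contDiffAt_u h hx).sub (contDiffAt_u h' hx)
  have hreg : ∀ x ∉ D.sing, d x = f x := fun x hx =>
    hlim x f (hcd x hx).continuousAt Filter.EventuallyEq.rfl
  have hper : Periodic2 D.a1 D.a2 d := by
    intro x w hw
    have hfw : f = fun y => f (y + w) := funext fun y => by
      simp only [hf, h.1 y w hw, h'.1 y w hw]
    have hmap : Filter.map (fun y => y + w) (nhdsWithin x {x}ᶜ) = nhdsWithin (x + w) {x + w}ᶜ := by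
      simp
    simp only [hd, limUnder]
    rw [← hmap, Filter.map_map]
    congr 2
    exact hfw.symm
  refine ⟨d, contDiff_of_periodic hper (fun x hx => ?_) fun i => ?_, hper, hreg⟩
  · refine (hcd x hx).congr_of_eventuallyEq ?_
    filter_upwards [compl_sing_mem_nhds D hx] with y hy using hreg y hy
  · obtain ⟨v, hv, hloc⟩ := local_form h i
    obtain ⟨v', hv', hloc'⟩ := local_form h' i
    refine (hv.sub hv').congr_of_eventuallyEq ?_
    filter_upwards [(hloc.and hloc').eventually_nhds] with x hx
    refine hlim x (fun y => v y - v' y) (hx.self_of_nhds.1.1.sub hx.self_of_nhds.2.1) ?_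
    by_cases hxp : x = D.p i
    · filter_upwards [hx.filter_mono nhdsWithin_le_nhds, self_mem_nhdsWithin] with y hy hyx
      have hne : y ≠ D.p i := fun hc => hyx (by rw [hc, hxp]; rfl)
      simp only [hf]
      rw [(hy.1.2 hne).2, (hy.2.2 hne).2]; ring
    · have : ∀ᶠ y in nhds x, y ≠ D.p i := isOpen_ne.mem_nhds hxp
      filter_upwards [hx.filter_mono nhdsWithin_le_nhds, this.filter_mono nhdsWithin_le_nhds]
        with y hy hne
      simp only [hf]
      rw [(hy.1.2 hne).2, (hy.2.2 hne).2]; ring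

end smooth

/-! ### Pointwise bounds from the maximum principle -/

lemma lap_nonneg_of_isLocalMin {f : R2 → ℝ} {x : R2} (hf : ContDiffAt ℝ 2 f x)
    (hm : IsLocalMin f x) : 0 ≤ lap f x := by
  have h1 := lap_add_mul (f := fun _ => (0 : ℝ)) (-1) contDiffAt_const hf
  have h0 : lap (fun _ : R2 => (0 : ℝ)) x = 0 := by simp [lap]
  have h2 : (fun y => (0 : ℝ) + -1 * f y) = fun y => -f y := by funext y; ring
  rw [h0, h2] at h1
  have := lap_nonpos_of_isLocalMax hf.neg hm.neg
  linarith [h1 ▸ this]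

section bounds
variable {D : VortexData} {lam mu : ℝ} {u N : R2 → ℝ}

lemma lap_u (h : IsMCSSolution D lam mu u N) {x : R2} (hx : x ∉ D.sing) :
    lap u x = -(mu * (N x - lam * D.expu u x)) := by
  rw [h.2.2.2.2.2.1 x hx, expu_of_notMem hx]; ring

lemma lap_N (h : IsMCSSolution D lam mu u N) (x : R2) :
    lap N x = mu ^ 2 * (N x - lam * D.expu u x) - mu * lam * D.expu u x * (lam - N x) := by
  rw [h.2.2.2.2.2.2 x]; ring

lemma lap_expu (h : IsMCSSolution D lam mu u N) {x : R2} (hx : x ∉ D.sing) :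
    lap (D.expu u) x = D.expu u x * (-(mu * (N x - lam * D.expu u x))
      + ∑ i : Fin 2, (fderiv ℝ u x (𝐞 i)) ^ 2) := by
  rw [lap_congr (expu_eventuallyEq hx u), lap_exp (contDiffAt_u h hx), lap_u h hx,
    ← expu_of_notMem hx]

lemma N_nonneg (hl : 0 < lam) (hm : 0 < mu) (h : IsMCSSolution D lam mu u N) (x : R2) :
    0 ≤ N x := by
  obtain ⟨y, hy⟩ := exists_max_periodic D (f := fun x => -N x)
    (fun x w hw => by beta_reduce; rw [h.2.1 x w hw]) (contDiff_N h).continuous.neg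
  have hmin : IsLocalMin N y := Filter.Eventually.of_forall fun z => by linarith [hy z]
  have h1 := lap_nonneg_of_isLocalMin (contDiff_N h).contDiffAt hmin
  rw [lap_N h] at h1
  have hw := expu_nonneg (D := D) u y
  have h2 : 0 ≤ N y := by
    by_contra hneg
    push Not at hneg
    have e1 : 0 < mu * (mu + lam * D.expu u y) := by positivity
    have e2 : 0 ≤ lam * mu * (mu + lam) * D.expu u y := by positivity
    nlinarith [mul_pos_of_neg_of_neg (neg_neg_of_pos e1) hneg]
  linarith [hy x]

/-- The bounds `e^u ≤ 1` and `N ≤ λ`, by comparing the maxima of `u` and `N`. -/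
lemma expu_le_one_and_N_le (hl : 0 < lam) (hm : 0 < mu) (h : IsMCSSolution D lam mu u N) :
    (∀ x, D.expu u x ≤ 1) ∧ ∀ x, N x ≤ lam := by
  obtain ⟨y, hy⟩ := exists_max_periodic D (periodic_expu h) (contDiff_expu h).continuous
  obtain ⟨z, hz⟩ := exists_max_periodic D h.2.1 (contDiff_N h).continuous
  obtain ⟨x0, hx0⟩ := (dense_sing_compl D).nonempty
  have hs : 0 < D.expu u y :=
    lt_of_lt_of_le (by rw [expu_of_notMem hx0]; exact Real.exp_pos _) (hy x0)
  have hys : y ∉ D.sing := fun hc => by rw [expu_of_mem hc] at hs; exact lt_irrefl _ hs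
  have hmaxu : IsLocalMax u y := by
    filter_upwards [compl_sing_mem_nhds D hys] with x hx
    have := hy x
    rw [expu_of_notMem hx, expu_of_notMem hys] at this
    exact Real.exp_le_exp.1 this
  have h1 := lap_nonpos_of_isLocalMax (contDiffAt_u h hys) hmaxu
  rw [lap_u h hys] at h1
  have h2 := lap_nonpos_of_isLocalMax (contDiff_N h).contDiffAt
    (Filter.Eventually.of_forall hz : IsLocalMax N z)
  rw [h.2.2.2.2.2.2 z] at h2
  have h3 : lam * D.expu u y ≤ N y := by
    by_contra hc
    push Not at hc
    nlinarith [mul_pos hm (sub_pos.2 hc)]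
  set s := D.expu u y
  set t := D.expu u z with ht
  have ht0 : 0 ≤ t := expu_nonneg u z
  have hts : t ≤ s := hy z
  have h4 : (mu + lam * t) * N z ≤ lam * (mu + lam) * t := by
    by_contra hc
    push Not at hc
    nlinarith [mul_pos hm (sub_pos.2 hc)]
  have h5 : lam * s ≤ N z := h3.trans (hz y)
  have hmt : 0 < mu + lam * t := by positivity
  have h6 : (mu + lam * t) * s ≤ (mu + lam) * t := by
    have : (mu + lam * t) * (lam * s) ≤ lam * (mu + lam) * t :=
      (mul_le_mul_of_nonneg_left h5 hmt.le).trans h4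
    by_contra hc
    push Not at hc
    nlinarith [mul_pos hl (sub_pos.2 hc)]
  have htpos : 0 < t := by
    by_contra hc
    have h0 : t = 0 := le_antisymm (not_lt.1 hc) ht0
    rw [h0] at h6
    nlinarith [mul_pos hm hs]
  have ht1 : t ≤ 1 := by
    have h7 : (mu + lam * t) * t ≤ (mu + lam) * t :=
      (mul_le_mul_of_nonneg_left hts hmt.le).trans h6
    have h8 := le_of_mul_le_mul_right h7 htpos
    by_contra hc
    push Not at hc
    nlinarith [mul_pos hl (sub_pos.2 hc)]
  have h9 : (mu + lam) * t ≤ mu + lam * t := by nlinarith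
  constructor
  · intro x
    refine (hy x).trans ?_
    by_contra hc
    push Not at hc
    nlinarith [mul_pos hmt (sub_pos.2 hc)]
  · intro x
    refine (hz x).trans ?_
    by_contra hc
    push Not at hc
    nlinarith [mul_pos hmt (sub_pos.2 hc), mul_le_mul_of_nonneg_left h9 hl.le]

/-- The bound `λ e^u ≤ N`, so that `u` is superharmonic. -/
lemma lam_expu_le_N (hl : 0 < lam) (hm : 0 < mu) (h : IsMCSSolution D lam mu u N) (x : R2) :
    lam * D.expu u x ≤ N x := by
  obtain ⟨hw1, hN1⟩ := expu_le_one_and_N_le hl hm h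
  obtain ⟨y, hy⟩ := exists_max_periodic D (f := fun x => N x * (-1) + lam * D.expu u x)
    (fun x w hw => by beta_reduce; rw [h.2.1 x w hw, periodic_expu h x w hw])
    (((contDiff_N h).continuous.mul continuous_const).add
      (continuous_const.mul (contDiff_expu h).continuous))
  suffices hT : lam * D.expu u y ≤ N y by linarith [hy x]
  by_cases hys : y ∈ D.sing
  · rw [expu_of_mem hys, mul_zero]; exact N_nonneg hl hm h y
  by_contra hneg
  push Not at hneg
  have hmin : IsLocalMin (fun x => N x + (-lam) * D.expu u x) y :=
    Filter.Eventually.of_forall fun z => by linarith [hy z]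
  have h1 := lap_nonneg_of_isLocalMin
    ((contDiff_N h).add (contDiff_const.mul (contDiff_expu h))).contDiffAt hmin
  rw [lap_add_mul _ (contDiff_N h).contDiffAt (contDiff_expu h).contDiffAt, lap_N h,
    lap_expu h hys] at h1
  set w := D.expu u y
  have hw0 : 0 ≤ w := expu_nonneg u y
  have hsum : 0 ≤ ∑ i : Fin 2, (fderiv ℝ u y (𝐞 i)) ^ 2 :=
    Finset.sum_nonneg fun _ _ => sq_nonneg _
  have e1 : 0 ≤ lam * w * ∑ i : Fin 2, (fderiv ℝ u y (𝐞 i)) ^ 2 := by positivity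
  have e2 : 0 ≤ mu * lam * w * (lam - N y) :=
    mul_nonneg (by positivity) (sub_nonneg.2 (hN1 y))
  have e3 : (mu ^ 2 + lam * w * mu) * (N y - lam * w) < 0 :=
    mul_neg_of_pos_of_neg (by positivity) (by linarith)
  nlinarith

/-! ### The energy estimate -/

lemma continuous_T (h : IsMCSSolution D lam mu u N) :
    Continuous fun x => N x - lam * D.expu u x :=
  (contDiff_N h).continuous.sub (continuous_const.mul (contDiff_expu h).continuous)

/-- The total mass `∫ μ(N - λe^u)` is the same for all solutions and all parameters: the
difference of two solutions is `C²` and periodic, so its Laplacian has integral zero. -/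
lemma mass_eq {lam' mu' : ℝ} {u' N' : R2 → ℝ} (h : IsMCSSolution D lam mu u N)
    (h' : IsMCSSolution D lam' mu' u' N') :
    mu * D.I (fun x => N x - lam * D.expu u x)
      = mu' * D.I (fun x => N' x - lam' * D.expu u' x) := by
  obtain ⟨d, hd, hp, hdu⟩ := exists_smooth_diff h h'
  have hlap : lap d = fun x => -mu * (N x - lam * D.expu u x)
      + mu' * (N' x - lam' * D.expu u' x) := by
    refine Continuous.ext_on (dense_sing_compl D) (continuous_lap hd)
      ((continuous_const.mul (continuous_T h)).add (continuous_const.mul (continuous_T h')))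
      fun x hx => ?_
    have hev : d =ᶠ[nhds x] fun y => u y + (-1) * u' y := by
      filter_upwards [compl_sing_mem_nhds D hx] with y hy
      rw [hdu y hy]; ring
    rw [lap_congr hev, lap_add_mul _ (contDiffAt_u h hx) (contDiffAt_u h' hx), lap_u h hx,
      lap_u h' hx]
    ring
  have h0 := I_lap D hd hp
  rw [hlap, I_add_mul D (F := fun x => -mu * (N x - lam * D.expu u x))
    (continuous_const.mul (continuous_T h)) (continuous_T h'), I_const_mul D (continuous_T h)] at h0
  linarith

lemma fderiv_eq_sum (f : R2 → ℝ) (x e : R2) :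
    fderiv ℝ f x e = e 0 * fderiv ℝ f x (𝐞 0) + e 1 * fderiv ℝ f x (𝐞 1) := by
  have he : e = e 0 • 𝐞 0 + e 1 • 𝐞 1 := by
    ext i; fin_cases i <;> simp
  conv_lhs => rw [he]
  simp

/-- The phase function `(1 - e^u)²`, which is small exactly where `u` is near `0`. -/
def VortexData.G (D : VortexData) (u : R2 → ℝ) (x : R2) : ℝ := (1 - D.expu u x) ^ 2

lemma contDiff_G (h : IsMCSSolution D lam mu u N) : ContDiff ℝ 2 (D.G u) :=
  (contDiff_const.sub (contDiff_expu h)).pow 2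

lemma periodic_G (h : IsMCSSolution D lam mu u N) : Periodic2 D.a1 D.a2 (D.G u) :=
  fun x w hw => by unfold VortexData.G; rw [periodic_expu h x w hw]

/-- Pointwise Modica–Mortola inequality: `λ|∂ₑ(1 - e^u)²|` is controlled by
`e^u(|∇u|² + λ²(1 - e^u)²)`, which the equations bound by the bracket on the right.  The integral of
the bracket is a multiple of the total mass, because the two Laplacians integrate to zero. -/
lemma modica_mortola (hl : 0 < lam) (hm : 0 < mu) (hle : lam ≤ mu)
    (h : IsMCSSolution D lam mu u N) (e x : R2) :
    lam * |fderiv ℝ (D.G u) x e| ≤ (|e 0| + |e 1|) *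
      ((lap (D.expu u) x + (-mu⁻¹) * lap N x) + 3 * mu * (N x - lam * D.expu u x)) := by
  have hG1 : ContDiff ℝ 1 (D.G u) := (contDiff_G h).of_le (by norm_num)
  have hclosed : IsClosed {x | lam * |fderiv ℝ (D.G u) x e| ≤ (|e 0| + |e 1|) *
      ((lap (D.expu u) x + (-mu⁻¹) * lap N x) + 3 * mu * (N x - lam * D.expu u x))} :=
    isClosed_le (continuous_const.mul (continuous_dir hG1 e).abs)
      (continuous_const.mul (((continuous_lap (contDiff_expu h)).add
        (continuous_const.mul (continuous_lap (contDiff_N h)))).add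
          (continuous_const.mul (continuous_T h))))
  refine hclosed.closure_subset_iff.2 (fun x hx => ?_) (dense_sing_compl D x)
  have hu1 : DifferentiableAt ℝ u x := (contDiffAt_u h hx).differentiableAt (by norm_num)
  have hdG : fderiv ℝ (D.G u) x e
      = -(2 * (1 - D.expu u x) * D.expu u x * fderiv ℝ u x e) := by
    have hev : D.G u =ᶠ[nhds x] fun y => (1 - Real.exp (u y)) ^ 2 := by
      filter_upwards [compl_sing_mem_nhds D hx] with y hy
      unfold VortexData.G; rw [expu_of_notMem hy]
    have hfd : HasFDerivAt (fun y => (1 - Real.exp (u y)) ^ 2) _ x :=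
      ((hu1.hasFDerivAt.exp).const_sub 1).pow 2
    rw [hev.fderiv_eq, hfd.fderiv, expu_of_notMem hx]
    simp
    ring
  have hw0 := expu_nonneg (D := D) u x
  have hw1 := (expu_le_one_and_N_le hl hm h).1 x
  have hT := lam_expu_le_N hl hm h x
  change lam * |fderiv ℝ (D.G u) x e| ≤ _
  rw [hdG, fderiv_eq_sum u x e, lap_expu h hx, lap_N h, Fin.sum_univ_two]
  generalize D.expu u x = w at *
  generalize fderiv ℝ u x (𝐞 0) = a
  generalize fderiv ℝ u x (𝐞 1) = b
  set T := N x - lam * w with hTdef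
  have hT0 : 0 ≤ T := sub_nonneg.2 hT
  have hq0 : 0 ≤ 1 - w := sub_nonneg.2 hw1
  have hinner : w * (a ^ 2 + b ^ 2 + lam ^ 2 * (1 - w) ^ 2) ≤ w * (-(mu * T) + (a ^ 2 + b ^ 2))
      + -mu⁻¹ * (mu ^ 2 * T - mu * lam * w * (lam - N x)) + 3 * mu * T := by
    have e1 : -mu⁻¹ * (mu ^ 2 * T - mu * lam * w * (lam - N x))
        = -(mu * T) + lam * w * (lam - N x) := by field_simp; ring
    have e2 : lam - N x = lam * (1 - w) - T := by rw [hTdef]; ring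
    rw [e1, e2]
    have e3 : 0 ≤ mu * T * (1 - w) := by positivity
    have e4 : lam * w * T ≤ mu * 1 * T := by gcongr
    have e5 : 0 ≤ w * lam ^ 2 * (1 - w) * w := by positivity
    nlinarith
  have hab : |2 * (1 - w) * w * (e 0 * a + e 1 * b)| * lam ≤
      (|e 0| + |e 1|) * (w * (a ^ 2 + b ^ 2 + lam ^ 2 * (1 - w) ^ 2)) := by
    have k1 : |e 0 * a + e 1 * b| ≤ |e 0| * |a| + |e 1| * |b| := by
      refine (abs_add_le _ _).trans ?_; rw [abs_mul, abs_mul]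
    have k2 : 2 * (lam * (1 - w)) * |a| ≤ a ^ 2 + b ^ 2 + lam ^ 2 * (1 - w) ^ 2 := by
      nlinarith [sq_nonneg (lam * (1 - w) - |a|), sq_abs a, sq_nonneg b]
    have k3 : 2 * (lam * (1 - w)) * |b| ≤ a ^ 2 + b ^ 2 + lam ^ 2 * (1 - w) ^ 2 := by
      nlinarith [sq_nonneg (lam * (1 - w) - |b|), sq_abs b, sq_nonneg a]
    rw [abs_mul, abs_of_nonneg (by positivity : 0 ≤ 2 * (1 - w) * w)]
    calc 2 * (1 - w) * w * |e 0 * a + e 1 * b| * lam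
        ≤ 2 * (1 - w) * w * (|e 0| * |a| + |e 1| * |b|) * lam := by gcongr
      _ = w * (|e 0| * (2 * (lam * (1 - w)) * |a|) + |e 1| * (2 * (lam * (1 - w)) * |b|)) := by
          ring
      _ ≤ w * (|e 0| * (a ^ 2 + b ^ 2 + lam ^ 2 * (1 - w) ^ 2)
            + |e 1| * (a ^ 2 + b ^ 2 + lam ^ 2 * (1 - w) ^ 2)) := by gcongr
      _ = _ := by ring
  rw [abs_neg, mul_comm lam]
  exact hab.trans (mul_le_mul_of_nonneg_left hinner (by positivity))

/-- The total variation of the phase function is at most a constant times `1/λ`. -/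
lemma energy_bound (hl : 0 < lam) (hm : 0 < mu) (hle : lam ≤ mu)
    (h : IsMCSSolution D lam mu u N) (e : R2) :
    D.I (fun x => |fderiv ℝ (D.G u) x e|) ≤
      (|e 0| + |e 1|) * (3 * (mu * D.I (fun x => N x - lam * D.expu u x))) / lam := by
  have hG1 : ContDiff ℝ 1 (D.G u) := (contDiff_G h).of_le (by norm_num)
  have hc1 := continuous_lap (contDiff_expu h)
  have hc2 := continuous_lap (contDiff_N h)
  have hc3 := continuous_T h
  have hc12 : Continuous fun x => lap (D.expu u) x + (-mu⁻¹) * lap N x :=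
    hc1.add (continuous_const.mul hc2)
  have hc123 : Continuous fun x => (lap (D.expu u) x + (-mu⁻¹) * lap N x)
      + 3 * mu * (N x - lam * D.expu u x) := hc12.add (continuous_const.mul hc3)
  have h1 := I_mono D (F := fun x => lam * |fderiv ℝ (D.G u) x e|)
    (G := fun x => (|e 0| + |e 1|) * ((lap (D.expu u) x + (-mu⁻¹) * lap N x)
      + 3 * mu * (N x - lam * D.expu u x))) (continuous_const.mul (continuous_dir hG1 e).abs)
    (continuous_const.mul hc123) (modica_mortola hl hm hle h e)
  rw [I_const_mul D (continuous_dir hG1 e).abs, I_const_mul D hc123,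
    I_add_mul D hc12 hc3, I_add_mul D hc1 hc2, I_lap D (contDiff_expu h) (periodic_expu h),
    I_lap D (contDiff_N h) h.2.1] at h1
  rw [le_div_iff₀ hl]
  linarith

end bounds

/-! ### Good coordinate lines -/

section lines
variable (D : VortexData)

/-- The union of all coordinate lines along which `f` oscillates by at most `σ`. -/
def VortexData.good (f : R2 → ℝ) (σ : ℝ) : Set R2 :=
  {x | (∀ t t', |f (D.pt (D.c1 x) t) - f (D.pt (D.c1 x) t')| ≤ σ) ∨
    ∀ s s', |f (D.pt s (D.c2 x)) - f (D.pt s' (D.c2 x))| ≤ σ}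

/-- Good lines in the two directions cross, so `f` is almost constant on their union. -/
lemma good_osc {f : R2 → ℝ} {σ : ℝ} (hσ : 0 ≤ σ)
    (H1 : ∃ t, ∀ s s', |f (D.pt s t) - f (D.pt s' t)| ≤ σ)
    (H2 : ∃ s, ∀ t t', |f (D.pt s t) - f (D.pt s t')| ≤ σ)
    {x y : R2} (hx : x ∈ D.good f σ) (hy : y ∈ D.good f σ) : f x ≤ f y + 3 * σ := by
  obtain ⟨t0, ht0⟩ := H1
  obtain ⟨s0, hs0⟩ := H2
  rw [← pt_coords D x, ← pt_coords D y]
  rcases hx with hx | hx <;> rcases hy with hy | hy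
  · have e1 := (abs_le.1 (hx (D.c2 x) t0)).2
    have e2 := (abs_le.1 (ht0 (D.c1 x) (D.c1 y))).2
    have e3 := (abs_le.1 (hy t0 (D.c2 y))).2
    linarith
  · have e1 := (abs_le.1 (hx (D.c2 x) (D.c2 y))).2
    have e2 := (abs_le.1 (hy (D.c1 x) (D.c1 y))).2
    linarith
  · have e1 := (abs_le.1 (hx (D.c1 x) (D.c1 y))).2
    have e2 := (abs_le.1 (hy (D.c2 x) (D.c2 y))).2
    linarith
  · have e1 := (abs_le.1 (hx (D.c1 x) s0)).2
    have e2 := (abs_le.1 (hs0 (D.c2 x) (D.c2 y))).2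
    have e3 := (abs_le.1 (hy s0 (D.c1 y))).2
    linarith

/-- Every point lies in a small compact parallelogram bounded by good lines. -/
lemma exists_good_box {f : R2 → ℝ} {σ ℓ : ℝ}
    (H1 : ∀ α, ∃ t ∈ Icc α (α + ℓ), ∀ s s', |f (D.pt s t) - f (D.pt s' t)| ≤ σ)
    (H2 : ∀ α, ∃ s ∈ Icc α (α + ℓ), ∀ t t', |f (D.pt s t) - f (D.pt s t')| ≤ σ)
    (hl : 0 < ℓ) (y : R2) :
    ∃ B : Set R2, IsCompact B ∧ y ∈ B ∧ (∀ x ∈ B, ‖x - y‖ ≤ 2 * ℓ * (‖D.a1‖ + ‖D.a2‖)) ∧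
      ∀ x ∈ B, B ∈ nhds x ∨ x ∈ D.good f σ := by
  obtain ⟨s1, ⟨hs1, hs1'⟩, g1⟩ := H2 (D.c1 y - 2 * ℓ)
  obtain ⟨s2, ⟨hs2, hs2'⟩, g2⟩ := H2 (D.c1 y + ℓ)
  obtain ⟨t1, ⟨ht1, ht1'⟩, g3⟩ := H1 (D.c2 y - 2 * ℓ)
  obtain ⟨t2, ⟨ht2, ht2'⟩, g4⟩ := H1 (D.c2 y + ℓ)
  refine ⟨D.box s1 s2 t1 t2, isCompact_box D _ _ _ _, ⟨⟨by linarith, by linarith⟩,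
    by linarith, by linarith⟩, ?_, ?_⟩
  · rintro x ⟨⟨h1, h2⟩, h3, h4⟩
    refine (norm_sub_le_coords D x y).trans ?_
    have e1 : |D.c1 x - D.c1 y| ≤ 2 * ℓ := abs_le.2 ⟨by linarith, by linarith⟩
    have e2 : |D.c2 x - D.c2 y| ≤ 2 * ℓ := abs_le.2 ⟨by linarith, by linarith⟩
    rw [mul_add]
    gcongr
  · rintro x ⟨⟨h1, h2⟩, h3, h4⟩
    rcases h1.eq_or_lt with h1 | h1
    · right; left; rw [← h1]; exact g1
    rcases h2.eq_or_lt with h2 | h2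
    · right; left; rw [h2]; exact g2
    rcases h3.eq_or_lt with h3 | h3
    · right; right; rw [← h3]; exact g3
    rcases h4.eq_or_lt with h4 | h4
    · right; right; rw [h4]; exact g4
    exact Or.inl (box_mem_nhds D ⟨h1, h2⟩ ⟨h3, h4⟩)

end lines

/-! ### Propagation of smallness by the maximum principle -/

section propagation
variable {D : VortexData} {lam mu : ℝ} {u N : R2 → ℝ}

/-- If `H = -u + (λ - N)/μ` is small at `x₀`, then `-u` is small somewhere on the boundary of a
box of size `O(1/λ)` around `x₀`.  Otherwise the maximum of `z - H`, with `z` the barrier solving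
`Δz = λ²z`, is positive and interior; but `ΔH = λe^u(λ - N) ≤ λ²H < λ²z` there. -/
lemma exists_small_boundary (hl : 0 < lam) (hm : 0 < mu) (h : IsMCSSolution D lam mu u N)
    {η R : ℝ} (hη : 0 < η) {A B : Set R2} {x0 : R2} (hB : IsCompact B) (hx0 : x0 ∈ B)
    (hBR : ∀ x ∈ B, ‖x - x0‖ ≤ R / lam) (hBA : ∀ x ∈ B, B ∈ nhds x ∨ x ∈ A)
    (hs : x0 ∉ D.sing) (hsmall : -u x0 + (lam - N x0) / mu < η * Real.exp (-R)) :
    ∃ b ∈ A, b ∉ D.sing ∧ -u b < η := by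
  by_contra hcon
  push Not at hcon
  obtain ⟨hw1, hN1⟩ := expu_le_one_and_N_le hl hm h
  -- normalized so that `z x₀ = η e^{-R}` and `z ≤ η` on `B`
  set z := barrier lam (Real.log η - lam * x0 0 - R) with hz
  have hzc : ContDiff ℝ 2 z := contDiff_barrier _ _
  have hz0 : z x0 = η * Real.exp (-R) := by
    rw [hz, barrier, show lam * x0 0 + (Real.log η - lam * x0 0 - R) = Real.log η + -R by ring,
      Real.exp_add, Real.exp_log hη]
  have hzη : ∀ x ∈ B, z x ≤ η := fun x hx => by
    have e1 : x 0 - x0 0 ≤ R / lam := by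
      have e2 := PiLp.norm_apply_le (x - x0) 0
      have e3 := le_abs_self (x 0 - x0 0)
      simp only [PiLp.sub_apply, Real.norm_eq_abs] at e2
      linarith [hBR x hx]
    rw [le_div_iff₀ hl] at e1
    calc z x ≤ Real.exp (Real.log η) := Real.exp_le_exp.2 (by nlinarith)
      _ = η := Real.exp_log hη
  -- the exponential of `z - H`, up to a constant factor, is continuous across the vortices
  have hF : ∀ x ∉ D.sing, D.expu u x * Real.exp (mu⁻¹ * N x + z x)
      = Real.exp (u x + mu⁻¹ * N x + z x) := fun x hx => by
    rw [expu_of_notMem hx, ← Real.exp_add]; ring_nf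
  obtain ⟨y, hyB, hy⟩ := hB.exists_isMaxOn ⟨x0, hx0⟩
    (f := fun x => D.expu u x * Real.exp (mu⁻¹ * N x + z x))
    ((contDiff_expu h).continuous.mul (Real.continuous_exp.comp
      ((continuous_const.mul (contDiff_N h).continuous).add hzc.continuous))).continuousOn
  have hyx0 : Real.exp (u x0 + mu⁻¹ * N x0 + z x0)
      ≤ D.expu u y * Real.exp (mu⁻¹ * N y + z y) := by
    rw [← hF x0 hs]; exact hy hx0
  have hys : y ∉ D.sing := fun hc => by
    rw [expu_of_mem hc, zero_mul] at hyx0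
    exact absurd hyx0 (not_le.2 (Real.exp_pos _))
  rw [hF y hys, Real.exp_le_exp] at hyx0
  have hdiv : ∀ x, (lam - N x) / mu = lam / mu - mu⁻¹ * N x := fun x => by
    field_simp
  have hHy : -u y + (lam - N y) / mu < z y := by
    rw [hdiv] at hsmall ⊢; linarith
  have hNy : 0 ≤ (lam - N y) / mu := div_nonneg (sub_nonneg.2 (hN1 y)) hm.le
  have hyA : y ∉ A := fun hc => by linarith [hcon y hc hys, hzη y hyB]
  have hmax : IsLocalMax (fun x => (u x + mu⁻¹ * N x) + 1 * z x) y := by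
    filter_upwards [(hBA y hyB).resolve_right hyA, compl_sing_mem_nhds D hys] with x hxB hxs
    have := hy hxB
    simp only [mem_ofPred_eq] at this
    rw [hF x hxs, hF y hys, Real.exp_le_exp] at this
    linarith
  have huN : ContDiffAt ℝ 2 (fun x => u x + mu⁻¹ * N x) y :=
    (contDiffAt_u h hys).add (contDiffAt_const.mul (contDiff_N h).contDiffAt)
  have hlap := lap_nonpos_of_isLocalMax
    (huN.add (contDiffAt_const.mul hzc.contDiffAt)) hmax
  rw [lap_add_mul _ huN hzc.contDiffAt, lap_add_mul _ (contDiffAt_u h hys)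
    (contDiff_N h).contDiffAt, lap_u h hys, lap_N h, hz, lap_barrier, ← hz] at hlap
  have hT := lam_expu_le_N hl hm h y
  have hexp : u y + 1 ≤ D.expu u y := by
    rw [expu_of_notMem hys]; exact Real.add_one_le_exp _
  have hw0 := expu_nonneg (D := D) u y
  have hw := hw1 y
  have hN := hN1 y
  generalize D.expu u y = w at *
  have e1 : -(mu * (N y - lam * w)) + mu⁻¹ * (mu ^ 2 * (N y - lam * w) -
      mu * lam * w * (lam - N y)) = -(lam * w * (lam - N y)) := by
    field_simp; ring
  rw [e1] at hlap
  have e2 : lam - N y < lam * z y := by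
    have : lam * (1 - w) < lam * z y := mul_lt_mul_of_pos_left (by linarith) hl
    linarith
  have e3 : lam * w * (lam - N y) ≤ lam * 1 * (lam - N y) := by
    have := sub_nonneg.2 hN
    gcongr
  nlinarith [mul_lt_mul_of_pos_left e2 hl]

/-- On a compact set free of vortices the subharmonic function `-u` is bounded by its values on
the boundary. -/
lemma neg_u_le_of_boundary (hl : 0 < lam) (hm : 0 < mu) (h : IsMCSSolution D lam mu u N)
    {c : ℝ} {A B : Set R2} {y : R2} (hB : IsCompact B) (hy : y ∈ B)
    (hBs : ∀ x ∈ B, x ∉ D.sing) (hBA : ∀ x ∈ B, B ∈ nhds x ∨ x ∈ A)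
    (hA : ∀ x ∈ A, x ∉ D.sing → -u x ≤ c) : -u y ≤ c := by
  have hzc : ContDiff ℝ 2 (barrier 1 0) := contDiff_barrier 1 0
  have hzpos : ∀ x, 0 < barrier 1 0 x := fun x => Real.exp_pos _
  obtain ⟨p, -, hp⟩ := hB.exists_isMaxOn ⟨y, hy⟩ hzc.continuous.continuousOn
  refine le_of_forall_pos_le_add fun ε hε => ?_
  -- a small multiple of the barrier makes `-u` strictly subharmonic
  set δ := ε / barrier 1 0 p with hδ
  have hδ0 : 0 < δ := div_pos hε (hzpos p)
  have hsm : ∀ x ∈ B, ContDiffAt ℝ 2 (fun x => u x + (-δ) * barrier 1 0 x) x := fun x hx =>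
    (contDiffAt_u h (hBs x hx)).add (contDiffAt_const.mul hzc.contDiffAt)
  obtain ⟨q, hqB, hq⟩ := hB.exists_isMinOn ⟨y, hy⟩
    (f := fun x => u x + (-δ) * barrier 1 0 x)
    fun x hx => (hsm x hx).continuousAt.continuousWithinAt
  have hqA : q ∈ A := by
    refine (hBA q hqB).resolve_left fun hn => ?_
    have hmin : IsLocalMin (fun x => u x + (-δ) * barrier 1 0 x) q := by
      filter_upwards [hn] with x hx using hq hx
    have hlap := lap_nonneg_of_isLocalMin (hsm q hqB) hmin
    rw [lap_add_mul _ (contDiffAt_u h (hBs q hqB)) hzc.contDiffAt, lap_u h (hBs q hqB),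
      lap_barrier] at hlap
    have e1 := mul_nonneg hm.le (sub_nonneg.2 (lam_expu_le_N hl hm h q))
    have e2 := mul_pos hδ0 (hzpos q)
    linarith
  have h1 : u q + (-δ) * barrier 1 0 q ≤ u y + (-δ) * barrier 1 0 y := hq hy
  have h2 : δ * barrier 1 0 q ≤ δ * barrier 1 0 p := mul_le_mul_of_nonneg_left (hp hqB) hδ0.le
  have h3 : δ * barrier 1 0 p = ε := div_mul_cancel₀ _ (hzpos p).ne'
  have h4 := mul_pos hδ0 (hzpos y)
  have h5 := hA q hqA (hBs q hqB)
  linarith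

end propagation

/-! ### The quantitative dichotomy -/

/-- Bound for `λ` times the total variation of the phase function along the lattice directions,
in terms of a bound `C` for the total mass. -/
def VortexData.S (D : VortexData) (C : ℝ) : ℝ :=
  3 * (|D.a1 0| + |D.a1 1| + |D.a2 0| + |D.a2 1|) * C

/-- The radius, in units of `1/λ`, of boxes bounded by good lines. -/
def VortexData.R (D : VortexData) (C η : ℝ) : ℝ :=
  2 * ((D.S C + 1) / η ^ 2) * (‖D.a1‖ + ‖D.a2‖)

/-- If `-u + (λ - N)/μ` is small at one point, then `-u` is small at every point whose distance
from the vortices is at least of order `1/λ`. -/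
lemma sol_close {D : VortexData} {lam mu C η : ℝ} {u N : R2 → ℝ} (hl : 0 < lam) (hm : 0 < mu)
    (hle : lam ≤ mu) (h : IsMCSSolution D lam mu u N)
    (hC : mu * D.I (fun x => N x - lam * D.expu u x) ≤ C) (hC0 : 0 ≤ C)
    (hη : 0 < η) (hη2 : η < 1 / 2) (hlam : (D.S C + 1) / η ^ 2 ≤ lam)
    {x0 : R2} (hs : x0 ∉ D.sing)
    (hsmall : -u x0 + (lam - N x0) / mu < η * Real.exp (-D.R C η))
    {y : R2} (hy : ∀ x, ‖x - y‖ ≤ D.R C η / lam → x ∉ D.sing) :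
    -u y ≤ -Real.log (1 - 2 * η) := by
  have hS0 : 0 ≤ D.S C := by unfold VortexData.S; positivity
  have hσ : 0 < η ^ 2 := by positivity
  set ℓ := (D.S C + 1) / η ^ 2 / lam with hℓ
  have hl0 : 0 < ℓ := by positivity
  have hl1 : ℓ ≤ 1 := (div_le_one hl).2 hlam
  have hlt : D.S C / lam < η ^ 2 * ℓ := by
    rw [hℓ, ← mul_div_assoc, mul_div_cancel₀ _ hσ.ne']
    gcongr
    linarith
  have hR : 2 * ℓ * (‖D.a1‖ + ‖D.a2‖) = D.R C η / lam := by
    unfold VortexData.R; rw [hℓ]; ring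
  have hG1 : ContDiff ℝ 1 (D.G u) := (contDiff_G h).of_le (by norm_num)
  have hen : ∀ e : R2, |e 0| + |e 1| ≤ |D.a1 0| + |D.a1 1| + |D.a2 0| + |D.a2 1| →
      D.I (fun x => |fderiv ℝ (D.G u) x e|) ≤ D.S C / lam := fun e he => by
    refine (energy_bound hl hm hle h e).trans ?_
    unfold VortexData.S
    gcongr ?_ / _
    calc (|e 0| + |e 1|) * (3 * (mu * D.I (fun x => N x - lam * D.expu u x)))
        ≤ (|e 0| + |e 1|) * (3 * C) := by gcongr
      _ ≤ (|D.a1 0| + |D.a1 1| + |D.a2 0| + |D.a2 1|) * (3 * C) := by gcongr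
      _ = _ := by ring
  have H1 := exists_good_line1 D hG1 (periodic_G h)
    (hen D.a1 (by linarith [abs_nonneg (D.a2 0), abs_nonneg (D.a2 1)])) hl0.le hl1 hlt
  have H2 := exists_good_line2 D hG1 (periodic_G h)
    (hen D.a2 (by linarith [abs_nonneg (D.a1 0), abs_nonneg (D.a1 1)])) hl0.le hl1 hlt
  obtain ⟨B, hB, hxB, hBR, hBA⟩ := exists_good_box D H1 H2 hl0 x0
  rw [hR] at hBR
  obtain ⟨b, hbA, hbs, hb⟩ := exists_small_boundary hl hm h hη hB hxB hBR hBA hs hsmall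
  have hGb : D.G u b ≤ η ^ 2 := by
    have e1 : u b + 1 ≤ D.expu u b := by
      rw [expu_of_notMem hbs]; exact Real.add_one_le_exp _
    have e2 := (expu_le_one_and_N_le hl hm h).1 b
    exact pow_le_pow_left₀ (by linarith) (by linarith) 2
  have hA : ∀ x ∈ D.good (D.G u) (η ^ 2), x ∉ D.sing → -u x ≤ -Real.log (1 - 2 * η) := by
    intro x hx hxs
    have e1 := good_osc D hσ.le ((H1 0).imp fun _ => And.right) ((H2 0).imp fun _ => And.right)
      hx hbA
    have e2 : (1 - D.expu u x) ^ 2 ≤ (2 * η) ^ 2 := by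
      change D.G u x ≤ _; linarith
    have e3 := le_of_abs_le (abs_le_of_sq_le_sq e2 (by positivity))
    rw [expu_of_notMem hxs] at e3
    have e4 : Real.log (1 - 2 * η) ≤ u x := by
      rw [Real.log_le_iff_le_exp (by linarith)]; linarith
    linarith
  obtain ⟨B', hB', hyB', hyR, hyA⟩ := exists_good_box D H1 H2 hl0 y
  rw [hR] at hyR
  exact neg_u_le_of_boundary hl hm h hB' hyB' (fun x hx => hy x (hyR x hx)) hyA hA

/-- along a subsequence, either `uₖ → 0` uniformly on compact sets avoiding
`Z + Λ`, or `sup u ≤ −ν₀ < 0` uniformly. -/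
theorem stmt6 (D : VortexData) (lam mu : ℕ → ℝ)
    (hlam_pos : ∀ k, 0 < lam k) (hmu_pos : ∀ k, 0 < mu k)
    (hlam : Tendsto lam atTop atTop)
    (hratio : Tendsto (fun k => mu k / lam k) atTop atTop)
    (u N : ℕ → R2 → ℝ)
    (hsol : ∀ k, IsMCSSolution D (lam k) (mu k) (u k) (N k)) :
    ∃ φ : ℕ → ℕ, StrictMono φ ∧
      ((∀ K : Set R2, IsCompact K → K ∩ D.sing = ∅ →
          Tendsto (fun j => ⨆ x : K, |u (φ j) (x : R2)|) atTop (nhds 0)) ∨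
       (∃ ν₀ > (0:ℝ), ∀ j : ℕ, ∀ x ∉ D.sing, u (φ j) x ≤ -ν₀)) := by
  by_cases hcase : ∃ ν > (0 : ℝ), ∃ᶠ k in atTop, ∀ x ∉ D.sing, u k x ≤ -ν
  · obtain ⟨ν, hν, hf⟩ := hcase
    obtain ⟨φ, hφ, hφ'⟩ := Filter.extraction_of_frequently_atTop hf
    exact ⟨φ, hφ, Or.inr ⟨ν, hν, hφ'⟩⟩
  push Not at hcase
  refine ⟨id, strictMono_id, Or.inl fun K hK hKs => ?_⟩
  -- the common value of the total mass
  set C := mu 0 * D.I (fun x => N 0 x - lam 0 * D.expu (u 0) x) with hC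
  have hC0 : 0 ≤ C := mul_nonneg (hmu_pos 0).le
    (I_nonneg D fun x => sub_nonneg.2 (lam_expu_le_N (hlam_pos 0) (hmu_pos 0) (hsol 0) x))
  have hu0 : ∀ k, ∀ x ∉ D.sing, u k x ≤ 0 := fun k x hx => by
    have := (expu_le_one_and_N_le (hlam_pos k) (hmu_pos k) (hsol k)).1 x
    rwa [expu_of_notMem hx, Real.exp_le_one_iff] at this
  rw [Metric.tendsto_nhds]
  intro ε hε
  -- `η` is chosen so that `-log (1 - 2η) = ε / 2`
  set ε' := ε / 2 with hε'
  have hε'0 : 0 < ε' := half_pos hε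
  set η := (1 - Real.exp (-ε')) / 2 with hη
  have hη0 : 0 < η := by
    have : Real.exp (-ε') < 1 := Real.exp_lt_one_iff.2 (by linarith)
    rw [hη]; linarith
  have hη2 : η < 1 / 2 := by
    have := Real.exp_pos (-ε')
    rw [hη]; linarith
  have hlog : -Real.log (1 - 2 * η) = ε' := by
    rw [show 1 - 2 * η = Real.exp (-ε') by rw [hη]; ring, Real.log_exp, neg_neg]
  set θ := η * Real.exp (-D.R C η) with hθ
  have hθ0 : 0 < θ := mul_pos hη0 (Real.exp_pos _)
  obtain ⟨r, hr, hrK⟩ := hK.exists_cthickening_subset_open (isClosed_sing D).isOpen_compl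
    (disjoint_iff_inter_eq_empty.2 hKs |>.subset_compl_right)
  have ev1 : ∀ᶠ k in atTop, D.R C η / lam k < r :=
    (hlam.const_div_atTop (D.R C η)).eventually_lt_const hr
  have ev2 : ∀ᶠ k in atTop, lam k / mu k < θ / 2 := by
    have := hratio.inv_tendsto_atTop.eventually_lt_const (half_pos hθ0)
    simpa only [Pi.inv_apply, inv_div] using this
  filter_upwards [ev1, ev2, hlam.eventually_ge_atTop ((D.S C + 1) / η ^ 2),
    hratio.eventually_ge_atTop 1, hcase (θ / 2) (half_pos hθ0)] with k h1 h2 h3 h4 h5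
  obtain ⟨x0, hx0, hux0⟩ := h5
  have hle : lam k ≤ mu k := (one_le_div (hlam_pos k)).1 h4
  have hsmall : -u k x0 + (lam k - N k x0) / mu k < θ := by
    have hN := N_nonneg (hlam_pos k) (hmu_pos k) (hsol k) x0
    have : (lam k - N k x0) / mu k ≤ lam k / mu k :=
      div_le_div_of_nonneg_right (by linarith) (hmu_pos k).le
    linarith
  have hbd : ∀ x : K, |u k (x : R2)| ≤ ε' := fun x => by
    have hfar : ∀ w, ‖w - (x : R2)‖ ≤ D.R C η / lam k → w ∉ D.sing := fun w hw =>
      hrK (mem_cthickening_of_dist_le w x r K x.2 (by rw [dist_eq_norm]; linarith))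
    have hxs : (x : R2) ∉ D.sing := hfar x (by
      rw [sub_self, norm_zero]
      refine div_nonneg ?_ (hlam_pos k).le
      unfold VortexData.R VortexData.S
      positivity)
    rw [abs_of_nonpos (hu0 k x hxs), ← hlog]
    exact sol_close (hlam_pos k) (hmu_pos k) hle (hsol k)
      (mass_eq (hsol k) (hsol 0)).le hC0 hη0 hη2 h3 hx0 hsmall hfar
  have hsup : ⨆ x : K, |u k (x : R2)| ≤ ε' := Real.iSup_le hbd hε'0.le
  have hsup0 : 0 ≤ ⨆ x : K, |u k (x : R2)| := Real.iSup_nonneg fun _ => abs_nonneg _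
  simp only [id, Real.dist_eq, sub_zero]
  rw [abs_of_nonneg hsup0]
  linarith

end
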